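/- Let r ∈ ℕ, f : ℝ → ℝ be r times continuously differentiable, and ε : ℝ → ℝ continuous with ε(t) > 0 for all t. Then there exists an entire function g : ℂ → ℂ, real-valued on ℝ, such that |(f − g|_ℝ)^(k)(t)| ≤ ε(t) for all t ∈ ℝ and all k ≤ r. -/

import Mathlib

open MeasureTheory ProbabilityTheory Filter Topology
open scoped NNReal ContDiff

/-- The extension to the complex plane of the convolution of `φ` with the centred Gaussian density
of variance `v`. -/
noncomputable def gaussianSmoothing (v : ℝ≥0) (φ : ℝ → ℝ) (z : ℂ) : ℂ :=
  ∫ s : ℝ, (φ s : ℂ) * (((√(2 * Real.pi * v))⁻¹ : ℝ) * Complex.exp (-(z - s) ^ 2 / (2 * v)))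

lemma gaussianSmoothing_ofReal {v : ℝ≥0} (hv : v ≠ 0) (φ : ℝ → ℝ) (x : ℝ) :
    gaussianSmoothing v φ x = ((∫ u, φ (x - u) ∂gaussianReal 0 v : ℝ) : ℂ) := by
  rw [integral_gaussianReal_eq_integral_smul hv, ← integral_sub_left_eq_self _ volume x,
    ← integral_complex_ofReal]
  refine integral_congr_ae (ae_of_all _ fun s => ?_)
  simp [gaussianPDFReal]
  ring

lemma HasCompactSupport.iteratedDeriv {φ : ℝ → ℝ} (hφ : HasCompactSupport φ) (k : ℕ) :
    HasCompactSupport (iteratedDeriv k φ) := by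
  induction k with
  | zero => simpa
  | succ k ih => rw [iteratedDeriv_succ]; exact ih.deriv

lemma hasDerivAt_integral_comp_sub (μ : Measure ℝ) [IsFiniteMeasure μ] {φ : ℝ → ℝ}
    (hφ : ContDiff ℝ 1 φ) (hs : HasCompactSupport φ) (x : ℝ) :
    HasDerivAt (fun x => ∫ u, φ (x - u) ∂μ) (∫ u, deriv φ (x - u) ∂μ) x := by
  have hd : Continuous (deriv φ) := hφ.continuous_deriv le_rfl
  obtain ⟨C, hC⟩ := hs.deriv.exists_bound_of_continuous hd
  obtain ⟨B, hB⟩ := hs.exists_bound_of_continuous hφ.continuous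
  have hc := hφ.continuous
  refine (hasDerivAt_integral_of_dominated_loc_of_deriv_le (μ := μ) (bound := fun _ => C)
    (F := fun x u => φ (x - u)) (F' := fun x u => deriv φ (x - u)) (s := Set.univ)
    univ_mem (Eventually.of_forall fun y => ?_) ?_ ?_ (ae_of_all _ fun u y _ => hC _)
    (integrable_const _) (ae_of_all _ fun u y _ => ?_)).2
  · exact Continuous.aestronglyMeasurable (by fun_prop)
  · exact Integrable.of_bound (Continuous.aestronglyMeasurable (by fun_prop)) B
      (ae_of_all _ fun u => hB _)
  · exact Continuous.aestronglyMeasurable (by fun_prop)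
  · exact ((hφ.differentiable one_ne_zero _).hasDerivAt (x := y - u)).comp_sub_const y u

lemma iteratedDeriv_integral_comp_sub (μ : Measure ℝ) [IsFiniteMeasure μ] {k : ℕ} {φ : ℝ → ℝ}
    (hφ : ContDiff ℝ k φ) (hs : HasCompactSupport φ) :
    iteratedDeriv k (fun x => ∫ u, φ (x - u) ∂μ) = fun x => ∫ u, iteratedDeriv k φ (x - u) ∂μ := by
  induction k with
  | zero => simp
  | succ k ih =>
    rw [iteratedDeriv_succ, ih (hφ.of_le (by exact_mod_cast k.le_succ))]
    ext x
    rw [iteratedDeriv_succ]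
    refine (hasDerivAt_integral_comp_sub μ ?_ (hs.iteratedDeriv k) x).deriv
    rw [iteratedDeriv_eq_iterate]
    exact ContDiff.iterate_deriv' 1 k (by rw [add_comm]; exact_mod_cast hφ)

lemma eventually_abs_integral_gaussianReal_sub_le {ψ : ℝ → ℝ} (hψ : Continuous ψ)
    (hs : HasCompactSupport ψ) {δ : ℝ} (hδ : 0 < δ) :
    ∀ᶠ v : ℝ≥0 in 𝓝[>] 0, ∀ x, |(∫ u, ψ (x - u) ∂gaussianReal 0 v) - ψ x| ≤ δ := by
  obtain ⟨B, hB⟩ := hs.exists_bound_of_continuous hψ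
  obtain ⟨η, hη, hη'⟩ := Metric.uniformContinuous_iff.1 (hs.uniformContinuous_of_continuous hψ)
    (δ / 2) (half_pos hδ)
  have hB0 : 0 ≤ B := (norm_nonneg _).trans (hB 0)
  have hlim : Tendsto (fun v : ℝ≥0 => 2 * B / η ^ 2 * (v : ℝ)) (𝓝[>] 0) (𝓝 0) := by
    refine Tendsto.mono_left ?_ nhdsWithin_le_nhds
    exact Continuous.tendsto' (by fun_prop) _ _ (by simp)
  filter_upwards [hlim.eventually_le_const (half_pos hδ)] with v hv x
  have hsq : Integrable (fun u : ℝ => u ^ 2) (gaussianReal 0 v) :=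
    (memLp_id_gaussianReal (μ := 0) (v := v) 2).integrable_sq
  have hvar : ∫ u, u ^ 2 ∂gaussianReal 0 v = v := by
    rw [← variance_id_gaussianReal (μ := 0), variance_of_integral_eq_zero (by fun_prop) (by simp)]
    simp
  have hint : Integrable (fun u => ψ (x - u)) (gaussianReal 0 v) :=
    Integrable.of_bound (Continuous.aestronglyMeasurable (by fun_prop)) B (ae_of_all _ fun u => hB _)
  have key : ∀ u, ‖ψ (x - u) - ψ x‖ ≤ δ / 2 + 2 * B / η ^ 2 * u ^ 2 := by
    intro u
    rcases lt_or_ge |u| η with h | h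
    · have := hη' (a := x - u) (b := x) (by simpa [Real.dist_eq] using h)
      rw [dist_eq_norm] at this
      have : 0 ≤ 2 * B / η ^ 2 * u ^ 2 := by positivity
      linarith
    · have h1 : ‖ψ (x - u) - ψ x‖ ≤ 2 * B := by
        linarith [norm_sub_le (ψ (x - u)) (ψ x), hB (x - u), hB x]
      have h2 : η ^ 2 ≤ u ^ 2 := by rw [← sq_abs u]; gcongr
      have h3 : 2 * B ≤ 2 * B / η ^ 2 * u ^ 2 := by
        rw [div_mul_eq_mul_div, le_div_iff₀ (by positivity)]; gcongr
      linarith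
  calc |(∫ u, ψ (x - u) ∂gaussianReal 0 v) - ψ x|
      = ‖∫ u, (ψ (x - u) - ψ x) ∂gaussianReal 0 v‖ := by
        rw [integral_sub hint (integrable_const _)]; simp
    _ ≤ ∫ u, (δ / 2 + 2 * B / η ^ 2 * u ^ 2) ∂gaussianReal 0 v :=
        norm_integral_le_of_norm_le ((integrable_const _).add (hsq.const_mul _)) (ae_of_all _ key)
    _ = δ / 2 + 2 * B / η ^ 2 * v := by
        rw [integral_add (integrable_const _) (hsq.const_mul _), integral_const_mul, hvar]; simp
    _ ≤ δ := by linarith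

lemma differentiable_gaussianSmoothing (v : ℝ≥0) {φ : ℝ → ℝ} (hφ : Continuous φ)
    (hs : HasCompactSupport φ) : Differentiable ℂ (gaussianSmoothing v φ) := by
  intro z₀
  set c : ℂ := (((√(2 * Real.pi * v))⁻¹ : ℝ) : ℂ)
  let F : ℂ → ℝ → ℂ := fun z s => (φ s : ℂ) * (c * Complex.exp (-(z - s) ^ 2 / (2 * v)))
  let K : ℂ → ℝ → ℂ := fun z s =>
    c * (Complex.exp (-(z - s) ^ 2 / (2 * v)) * (-(2 * (z - s)) / (2 * v)))
  let F' : ℂ → ℝ → ℂ := fun z s => (φ s : ℂ) * K z s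
  have hK : Continuous (Function.uncurry K) := by
    unfold K Function.uncurry; fun_prop
  obtain ⟨M, hM⟩ := ((isCompact_closedBall z₀ 1).prod hs).exists_bound_of_continuousOn
    hK.continuousOn
  have hφs : HasCompactSupport (fun s => (φ s : ℂ)) := hs.comp_left (g := ((↑) : ℝ → ℂ)) (by simp)
  have hφi : Integrable φ := hφ.integrable_of_hasCompactSupport hs
  refine (hasDerivAt_integral_of_dominated_loc_of_deriv_le (μ := volume)
    (bound := fun s => ‖φ s‖ * M) (F := F) (F' := F')
    (Metric.closedBall_mem_nhds z₀ one_pos) (Eventually.of_forall fun z => ?_) ?_ ?_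
    (ae_of_all _ fun s z hz => ?_) (hφi.norm.mul_const M)
    (ae_of_all _ fun s z hz => ?_)).2.differentiableAt
  · exact Continuous.aestronglyMeasurable (by unfold F; fun_prop)
  · exact Continuous.integrable_of_hasCompactSupport (by unfold F; fun_prop) hφs.mul_right
  · exact Continuous.aestronglyMeasurable (by unfold F' K; fun_prop)
  · by_cases h : φ s = 0
    · simp [F', h]
    · simp only [F', norm_mul, Complex.norm_real]
      gcongr
      exact hM (z, s) ⟨hz, subset_tsupport _ h⟩
  · have := ((((hasDerivAt_id z).sub_const (s : ℂ)).pow 2).neg.div_const (2 * (v : ℂ))).cexp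
    convert! (this.const_mul c).const_mul (φ s : ℂ) using 1
    simp [F', K]

lemma norm_gaussianSmoothing_le {v : ℝ≥0} (hv : v ≠ 0) {φ : ℝ → ℝ} (hφ : Integrable φ)
    {ρ : ℝ} (hρ : ∀ s, |s| < ρ → φ s = 0) {z : ℂ} (hz : ‖z‖ < ρ / 4) :
    ‖gaussianSmoothing v φ z‖ ≤ (∫ s, |φ s|) * (4 * √v / ρ ^ 2) := by
  have hρ0 : 0 < ρ := by linarith [norm_nonneg z]
  have hv0 : (0 : ℝ) < v := by positivity
  rw [← integral_mul_const]
  refine norm_integral_le_of_norm_le (hφ.abs.mul_const _) (ae_of_all _ fun s => ?_)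
  rw [norm_mul, Complex.norm_real, Real.norm_eq_abs]
  by_cases h : φ s = 0
  · simp [h]
  gcongr
  have hsρ : ρ ≤ |s| := not_lt.1 fun h' => h (hρ s h')
  have hre : ρ ^ 2 / 2 ≤ ((z - s) ^ 2).re := by
    have h1 := (Complex.abs_re_le_norm z).trans_lt hz
    have h2 := (Complex.abs_im_le_norm z).trans_lt hz
    have h3 : 3 * ρ / 4 ≤ |z.re - s| := by
      have := abs_sub_abs_le_abs_sub s z.re
      rw [abs_sub_comm] at this; linarith
    have h4 : (3 * ρ / 4) ^ 2 ≤ (z.re - s) ^ 2 := by rw [← sq_abs (z.re - s)]; gcongr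
    have h5 : z.im ^ 2 ≤ (ρ / 4) ^ 2 := by rw [← sq_abs z.im]; gcongr
    have h6 : ((z - s) ^ 2).re = (z.re - s) ^ 2 - z.im ^ 2 := by simp [sq]
    rw [h6]; nlinarith
  have hexp : ‖Complex.exp (-(z - s) ^ 2 / (2 * v))‖ ≤ 4 * v / ρ ^ 2 := by
    have h1 : (-(z - s) ^ 2 / (2 * (v : ℂ))).re = -(((z - s) ^ 2).re / (2 * v)) := by
      have : (2 * (v : ℂ)) = ((2 * v : ℝ) : ℂ) := by simp
      rw [this]
      rw [Complex.div_ofReal_re, Complex.neg_re, neg_div]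
    rw [Complex.norm_exp, h1, Real.exp_neg]
    refine inv_le_of_inv_le₀ (by positivity) ?_
    have h2 : (4 * v / ρ ^ 2)⁻¹ ≤ ((z - s) ^ 2).re / (2 * v) := by
      rw [inv_div, div_le_div_iff₀ (by positivity) (by positivity)]; nlinarith
    linarith [Real.add_one_le_exp (((z - s) ^ 2).re / (2 * v))]
  have hcst : ‖(((√(2 * Real.pi * v))⁻¹ : ℝ) : ℂ)‖ ≤ (√v)⁻¹ := by
    rw [Complex.norm_real, Real.norm_of_nonneg (by positivity)]
    gcongr
    nlinarith [Real.pi_gt_three]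
  rw [norm_mul]
  refine (mul_le_mul hcst hexp (norm_nonneg _) (by positivity)).trans_eq ?_
  field_simp
  rw [Real.sq_sqrt hv0.le]

/-- A compactly supported `C^r` function can be approximated in `C^r` by entire functions that are
small on a disc around the origin, as long as the function vanishes on a larger interval. -/
lemma exists_entire_approx {r : ℕ} {φ : ℝ → ℝ} (hφ : ContDiff ℝ r φ) (hs : HasCompactSupport φ)
    {ρ : ℝ} (hρ : ∀ s, |s| < ρ → φ s = 0) {δ : ℝ} (hδ : 0 < δ) :
    ∃ g : ℂ → ℂ, Differentiable ℂ g ∧ (∀ t : ℝ, (g t).im = 0) ∧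
      (∀ k ≤ r, ∀ t, |iteratedDeriv k (fun s : ℝ => (g s).re) t - iteratedDeriv k φ t| ≤ δ) ∧
      ∀ z, ‖z‖ < ρ / 4 → ‖g z‖ ≤ δ := by
  have hk : ∀ k ≤ r, ContDiff ℝ k φ := fun k hk => hφ.of_le (by exact_mod_cast hk)
  have h1 : ∀ᶠ v : ℝ≥0 in 𝓝[>] 0, ∀ k ∈ Finset.range (r + 1), ∀ x,
      |(∫ u, iteratedDeriv k φ (x - u) ∂gaussianReal 0 v) - iteratedDeriv k φ x| ≤ δ := by
    rw [Filter.eventually_all_finset]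
    intro k hkr
    exact eventually_abs_integral_gaussianReal_sub_le
      ((hk k (by simpa [Nat.lt_succ_iff] using hkr)).continuous_iteratedDeriv k le_rfl)
      (hs.iteratedDeriv k) hδ
  have h2 : Tendsto (fun v : ℝ≥0 => (∫ s, |φ s|) * (4 * √v / ρ ^ 2)) (𝓝[>] 0) (𝓝 0) := by
    refine Tendsto.mono_left ?_ nhdsWithin_le_nhds
    exact Continuous.tendsto' (by fun_prop) _ _ (by simp)
  obtain ⟨v, ⟨hv1, hv2⟩, hv0⟩ :=
    ((h1.and (h2.eventually_le_const hδ)).and self_mem_nhdsWithin).exists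
  have hv0 : v ≠ 0 := ne_of_gt hv0
  refine ⟨gaussianSmoothing v φ, differentiable_gaussianSmoothing v hφ.continuous hs,
    fun t => ?_, fun k hkr t => ?_, fun z hz => ?_⟩
  · rw [gaussianSmoothing_ofReal hv0, Complex.ofReal_im]
  · simp only [gaussianSmoothing_ofReal hv0, Complex.ofReal_re]
    rw [iteratedDeriv_integral_comp_sub _ (hk k hkr) hs]
    exact hv1 k (by simpa [Nat.lt_succ_iff] using hkr) t
  · exact (norm_gaussianSmoothing_le hv0 (hφ.continuous.integrable_of_hasCompactSupport hs)
      hρ hz).trans hv2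

lemma iteratedDeriv_re_comp_ofReal {g : ℂ → ℂ} (hg : Differentiable ℂ g) (k : ℕ) (t : ℝ) :
    iteratedDeriv k (fun s : ℝ => (g s).re) t = (iteratedDeriv k g t).re := by
  induction k generalizing t with
  | zero => simp
  | succ k ih =>
    rw [iteratedDeriv_succ, iteratedDeriv_succ, funext ih]
    have h : Differentiable ℂ (iteratedDeriv k g) :=
      (hg.contDiff (n := ω)).differentiable_iteratedDeriv k (WithTop.coe_lt_top _)
    exact (h t).hasDerivAt.real_of_complex.deriv

lemma TendstoLocallyUniformlyOn.iteratedDeriv {F : ℕ → ℂ → ℂ} {g : ℂ → ℂ}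
    (h : TendstoLocallyUniformlyOn F g atTop Set.univ) (hF : ∀ n, Differentiable ℂ (F n)) (k : ℕ) :
    TendstoLocallyUniformlyOn (fun n => iteratedDeriv k (F n)) (iteratedDeriv k g) atTop
      Set.univ := by
  induction k with
  | zero => simpa using h
  | succ k ih =>
    simp only [iteratedDeriv_succ]
    refine ih.deriv (Eventually.of_forall fun n => ?_) isOpen_univ
    exact (((hF n).contDiff (n := ω)).differentiable_iteratedDeriv k
      (WithTop.coe_lt_top _)).differentiableOn

lemma exists_tendstoLocallyUniformlyOn {G : ℕ → ℂ → ℂ} (h0 : G 0 = 0) {R : ℕ → ℝ}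
    (hR : Tendsto R atTop atTop)
    (hG : ∀ n z, ‖z‖ < R n → ‖G (n + 1) z - G n z‖ ≤ (1 / 2) ^ n) :
    ∃ g, TendstoLocallyUniformlyOn G g atTop Set.univ := by
  refine ⟨fun z => ∑' n, (G (n + 1) z - G n z), ?_⟩
  rw [tendstoLocallyUniformlyOn_iff_forall_isCompact isOpen_univ]
  intro K _ hK
  obtain ⟨B, hB⟩ := hK.isBounded.exists_norm_le
  have hev : ∀ᶠ n in atTop, ∀ z ∈ K, ‖G (n + 1) z - G n z‖ ≤ (1 / 2) ^ n := by
    filter_upwards [hR.eventually_gt_atTop B] with n hn z hz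
    exact hG n z ((hB z hz).trans_lt hn)
  convert! tendstoUniformlyOn_tsum_nat_eventually summable_geometric_two hev using 3 with N z
  rw [Finset.sum_range_sub (fun n => G n z)]
  simp [h0]

lemma exists_abs_iteratedDeriv_mul_le (r : ℕ) {χ : ℝ → ℝ} (hχ : ContDiff ℝ r χ)
    (hs : HasCompactSupport χ) :
    ∃ C > 0, ∀ h : ℝ → ℝ, ContDiff ℝ r h → ∀ t a : ℝ,
      (∀ k ≤ r, |iteratedDeriv k h t| ≤ a) →
        ∀ k ≤ r, |iteratedDeriv k (fun s => χ s * h s) t| ≤ C * a := by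
  have hB : ∀ i, ∃ B, i ≤ r → ∀ t, |iteratedDeriv i χ t| ≤ B := fun i => by
    by_cases hi : i ≤ r
    · obtain ⟨B, hB⟩ := (hs.iteratedDeriv i).exists_bound_of_continuous
        (hχ.continuous_iteratedDeriv i (by exact_mod_cast hi))
      exact ⟨B, fun _ => hB⟩
    · exact ⟨0, fun h => absurd h hi⟩
  choose B hB using hB
  refine ⟨1 + ∑ k ∈ Finset.range (r + 1), ∑ i ∈ Finset.range (k + 1), k.choose i * |B i|,
    by positivity, fun h hh t a ha k hk => ?_⟩
  have ha0 : 0 ≤ a := (abs_nonneg _).trans (ha 0 r.zero_le)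
  have h1 := norm_iteratedFDeriv_mul_le hχ hh t (n := k) (by exact_mod_cast hk)
  simp only [norm_iteratedFDeriv_eq_norm_iteratedDeriv, Real.norm_eq_abs] at h1
  calc _ ≤ _ := h1
    _ ≤ ∑ i ∈ Finset.range (k + 1), k.choose i * |B i| * a := by
      refine Finset.sum_le_sum fun i hi => ?_
      have hi : i ≤ k := by simpa [Nat.lt_succ_iff] using hi
      exact mul_le_mul (mul_le_mul_of_nonneg_left ((hB i (hi.trans hk) t).trans (le_abs_self _))
        (by positivity)) (ha _ (by omega)) (abs_nonneg _) (by positivity)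
    _ = (∑ i ∈ Finset.range (k + 1), k.choose i * |B i|) * a := by rw [Finset.sum_mul]
    _ ≤ _ := by
      gcongr
      have := Finset.single_le_sum
        (f := fun k => ∑ i ∈ Finset.range (k + 1), (k.choose i : ℝ) * |B i|)
        (fun j _ => by positivity) (Finset.mem_range.2 (Nat.lt_succ_of_le hk))
      linarith

lemma exists_annular_cutoff {a b c d : ℝ} (hab : a < b) (hcd : c < d) :
    ∃ χ : ℝ → ℝ, ContDiff ℝ ∞ χ ∧ HasCompactSupport χ ∧ (∀ t, |t| ≤ a → χ =ᶠ[𝓝 t] 0) ∧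
      ∀ t, b ≤ |t| → |t| ≤ c → χ =ᶠ[𝓝 t] 1 := by
  have hS : IsClosed {t : ℝ | |t| ≤ a ∨ d ≤ |t|} :=
    (isClosed_le continuous_abs continuous_const).union
      (isClosed_le continuous_const continuous_abs)
  have hT : IsClosed {t : ℝ | b ≤ |t| ∧ |t| ≤ c} :=
    (isClosed_le continuous_const continuous_abs).inter
      (isClosed_le continuous_abs continuous_const)
  have hST : Disjoint {t : ℝ | |t| ≤ a ∨ d ≤ |t|} {t : ℝ | b ≤ |t| ∧ |t| ≤ c} := by
    rw [Set.disjoint_left]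
    rintro t (h | h) ⟨h1, h2⟩ <;> linarith
  obtain ⟨χ, h0, h1, -⟩ := exists_contMDiffMap_zero_one_nhds_of_isClosed (n := ⊤)
    (modelWithCornersSelf ℝ ℝ) hS hT hST
  refine ⟨χ, χ.contMDiff.contDiff, ?_, fun t ht => ?_, fun t hb hc => ?_⟩
  · refine HasCompactSupport.intro (isCompact_closedBall (0 : ℝ) d) fun t ht => ?_
    exact h0.self_of_nhdsSet t (Or.inr (by simp at ht; exact ht.le))
  · exact eventually_nhdsSet_iff_forall.1 h0 t (Or.inl ht)
  · exact eventually_nhdsSet_iff_forall.1 h1 t ⟨hb, hc⟩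

lemma exists_entire_improvement {r : ℕ} {f : ℝ → ℝ} (hf : ContDiff ℝ r f) (n : ℕ) {δ : ℝ}
    (hδ : 0 < δ) :
    ∃ η > 0, ∀ G : ℂ → ℂ, Differentiable ℂ G → (∀ t : ℝ, (G t).im = 0) →
      (∀ t : ℝ, n - 1 ≤ |t| → |t| < n → ∀ k ≤ r,
        |iteratedDeriv k (fun s : ℝ => f s - (G s).re) t| ≤ η) →
      ∀ η' > 0, ∃ G' : ℂ → ℂ, Differentiable ℂ G' ∧ (∀ t : ℝ, (G' t).im = 0) ∧
        (∀ z, ‖z‖ < ((n : ℝ) - 1 / 2) / 4 → ‖G' z - G z‖ ≤ η') ∧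
        ∀ k ≤ r, ∀ t : ℝ,
          (n ≤ |t| → |t| < n + 1 → |iteratedDeriv k (fun s : ℝ => f s - (G' s).re) t| ≤ η') ∧
          (n - 1 ≤ |t| → |t| < n → |iteratedDeriv k (fun s : ℝ => f s - (G' s).re) t| ≤
            |iteratedDeriv k (fun s : ℝ => f s - (G s).re) t| + δ + η') ∧
          (|t| < n - 1 → |iteratedDeriv k (fun s : ℝ => f s - (G' s).re) t| ≤
            |iteratedDeriv k (fun s : ℝ => f s - (G s).re) t| + η') := by
  obtain ⟨χ, hχ, hχs, hχ0, hχ1⟩ := exists_annular_cutoff (a := n - 1 / 2) (b := n) (c := n + 1)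
    (d := n + 2) (by linarith) (by linarith)
  have hχr : ContDiff ℝ r χ := hχ.of_le (by exact_mod_cast le_top)
  obtain ⟨C, hC, hCb⟩ := exists_abs_iteratedDeriv_mul_le r hχr hχs
  refine ⟨δ / C, by positivity, fun G hG hGr hGb η' hη' => ?_⟩
  have hre : ∀ {g : ℂ → ℂ}, Differentiable ℂ g → ContDiff ℝ r fun s : ℝ => (g s).re :=
    fun hg => hg.contDiff.real_of_complex
  set h : ℝ → ℝ := fun s => f s - (G s).re with hh
  have hhr : ContDiff ℝ r h := hf.sub (hre hG)
  obtain ⟨g, hg, hgr, hgb, hgs⟩ := exists_entire_approx (φ := fun s => χ s * h s)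
    (hχr.mul hhr) hχs.mul_right (ρ := n - 1 / 2)
    (fun s hs => by simp [(hχ0 s hs.le).self_of_nhds]) hη'
  refine ⟨fun z => G z + g z, hG.add hg, fun t => by simp [hGr, hgr], fun z hz => ?_,
    fun k hk t => ?_⟩
  · simpa using hgs z hz
  have hD : iteratedDeriv k (fun s : ℝ => f s - (G s + g s).re) t =
      iteratedDeriv k h t - iteratedDeriv k (fun s : ℝ => (g s).re) t := by
    rw [← iteratedDeriv_sub (hhr.contDiffAt.of_le (by exact_mod_cast hk))
      ((hre hg).contDiffAt.of_le (by exact_mod_cast hk))]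
    congr 1
    ext s
    simp [hh]
    ring
  have hb := abs_le.1 (hgb k hk t)
  rw [hD]
  refine ⟨fun h1 h2 => ?_, fun h1 h2 => ?_, fun h1 => ?_⟩
  · have : (fun s => χ s * h s) =ᶠ[𝓝 t] h := by
      filter_upwards [hχ1 t h1 h2.le] with s hs
      simp [hs]
    rw [this.iteratedDeriv_eq] at hb
    rw [abs_le]
    constructor <;> linarith
  · have h3 := hCb h hhr t _ (hGb t h1 h2) k hk
    rw [mul_div_cancel₀ _ hC.ne'] at h3
    have h3 := abs_le.1 h3
    rw [add_assoc]
    refine (abs_sub _ _).trans (add_le_add_right (abs_le.2 ?_) _)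
    constructor <;> linarith
  · have : (fun s => χ s * h s) =ᶠ[𝓝 t] fun _ => 0 := by
      filter_upwards [hχ0 t (by linarith)] with s hs
      simp [hs]
    rw [this.iteratedDeriv_eq] at hb
    refine (abs_sub _ _).trans (add_le_add_right (abs_le.2 ?_) _)
    simp at hb
    constructor <;> linarith

/-- Carleman–Kaplan–Hoischen: simultaneous approximation of a `C^r` function and its
derivatives up to order `r` by the restriction to `ℝ` of an entire function, with error
controlled pointwise by a prescribed positive continuous function. -/
theorem carleman_kaplan_hoischen (r : ℕ) (f : ℝ → ℝ) (hf : ContDiff ℝ (r : ℕ∞) f)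
    (ε : ℝ → ℝ) (hε : Continuous ε) (hεpos : ∀ t, 0 < ε t) :
    ∃ g : ℂ → ℂ, Differentiable ℂ g ∧ (∀ t : ℝ, (g t).im = 0) ∧
      ∀ k ≤ r, ∀ t : ℝ, |iteratedDeriv k (fun s : ℝ => f s - (g s).re) t| ≤ ε t := by
  have hf : ContDiff ℝ r f := hf
  have he : ∀ n : ℕ, ∃ e > 0, ∀ t : ℝ, |t| ≤ n → e ≤ ε t := fun n => by
    obtain ⟨x, -, hx⟩ := (isCompact_closedBall (0 : ℝ) n).exists_isMinOn
      (Metric.nonempty_closedBall.2 n.cast_nonneg) hε.continuousOn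
    exact ⟨ε x, hεpos x, fun t ht => hx (by simpa using ht)⟩
  choose e he0 heb using he
  choose η hη0 hη using fun n => exists_entire_improvement hf n (half_pos (he0 n))
  -- the accuracy required of the approximant at each stage
  have hm : ∀ n, ∃ m : ℝ, 0 < m ∧ m ≤ η (n + 1) ∧ m ≤ (1 / 2) ^ n ∧
      ∀ t : ℝ, |t| < n + 1 → m ≤ ε t * (1 / 2) ^ (n + 2) := fun n => by
    refine ⟨min (min (η (n + 1)) ((1 / 2) ^ n)) (e (n + 1) * (1 / 2) ^ (n + 2)), ?_, ?_, ?_, ?_⟩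
    · have := he0 (n + 1); have := hη0 (n + 1); positivity
    · exact (min_le_left _ _).trans (min_le_left _ _)
    · exact (min_le_left _ _).trans (min_le_right _ _)
    · intro t ht
      refine (min_le_right _ _).trans ?_
      gcongr
      exact heb _ _ (by push_cast; exact ht.le)
  choose m hm0 hmη hm2 hmε using hm
  choose! next hnd hnr hnz hnt using
    fun n G h1 h2 h3 => hη n G h1 h2 h3 (m n) (hm0 n)
  let G : ℕ → ℂ → ℂ := fun n => Nat.rec 0 next n
  have hG : ∀ n, Differentiable ℂ (G n) ∧ (∀ t : ℝ, (G n t).im = 0) ∧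
      ∀ t : ℝ, n - 1 ≤ |t| → |t| < n → ∀ k ≤ r,
        |iteratedDeriv k (fun s : ℝ => f s - (G n s).re) t| ≤ η n := fun n => by
    induction n with
    | zero =>
      exact ⟨differentiable_const 0, fun t => rfl, fun t _ h => absurd (abs_nonneg t)
        (not_le.2 (by simpa using h))⟩
    | succ n ih =>
      obtain ⟨h1, h2, h3⟩ := ih
      refine ⟨hnd n _ h1 h2 h3, hnr n _ h1 h2 h3, fun t ht ht' k hk => ?_⟩
      push_cast at ht ht'
      exact ((hnt n _ h1 h2 h3 k hk t).1 (by linarith) ht').trans (hmη n)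
  have hGt := fun n => hnt n _ (hG n).1 (hG n).2.1 (hG n).2.2
  obtain ⟨g, hg⟩ := exists_tendstoLocallyUniformlyOn (G := G) rfl
    (R := fun n => ((n : ℝ) - 1 / 2) / 4)
    ((tendsto_atTop_add_const_right _ _ tendsto_natCast_atTop_atTop).atTop_div_const (by norm_num))
    fun n z hz => (hnz n _ (hG n).1 (hG n).2.1 (hG n).2.2 z hz).trans (hm2 n)
  have hgd : Differentiable ℂ g := differentiableOn_univ.1
    (hg.differentiableOn (Eventually.of_forall fun n => (hG n).1.differentiableOn) isOpen_univ)
  have hgk : ∀ k (z : ℂ), Tendsto (fun n => iteratedDeriv k (G n) z) atTop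
      (𝓝 (iteratedDeriv k g z)) := fun k z =>
    (hg.iteratedDeriv (fun n => (hG n).1) k).tendsto_at (Set.mem_univ z)
  refine ⟨g, hgd, fun t => ?_, fun k hk t => ?_⟩
  · have h := (Complex.continuous_im.tendsto _).comp (hgk 0 t)
    simp only [iteratedDeriv_zero] at h
    exact tendsto_nhds_unique h (tendsto_const_nhds.congr fun n => ((hG n).2.1 t).symm)
  have hsub : ∀ {u : ℂ → ℂ}, Differentiable ℂ u →
      iteratedDeriv k (fun s : ℝ => f s - (u s).re) t =
        iteratedDeriv k f t - (iteratedDeriv k u t).re := fun {u} hu => by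
    rw [← iteratedDeriv_re_comp_ofReal hu]
    exact iteratedDeriv_sub (hf.contDiffAt.of_le (by exact_mod_cast hk))
      hu.contDiff.real_of_complex.contDiffAt
  have hlim : Tendsto (fun n => |iteratedDeriv k (fun s : ℝ => f s - (G n s).re) t|) atTop
      (𝓝 |iteratedDeriv k (fun s : ℝ => f s - (g s).re) t|) := by
    simp only [hsub hgd, hsub (hG _).1]
    exact (((Complex.continuous_re.tendsto _).comp (hgk k t)).const_sub _).abs
  refine le_of_tendsto hlim ?_
  set N := ⌊|t|⌋₊
  have hN1 : (N : ℝ) ≤ |t| := Nat.floor_le (abs_nonneg t)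
  have hN2 : |t| < N + 1 := Nat.lt_floor_add_one _
  have hεt := hεpos t
  have hp : ∀ j : ℕ, (1 / 2 : ℝ) ^ j ≤ 1 := fun j => pow_le_one₀ (by norm_num) (by norm_num)
  -- once the annulus containing `t` has been treated, the error increases by a geometric series
  have key : ∀ j : ℕ, |iteratedDeriv k (fun s : ℝ => f s - (G (N + 2 + j) s).re) t| ≤
      ε t * (1 - (1 / 2) ^ (N + 3 + j)) := fun j => by
    induction j with
    | zero =>
      have h1 := (hGt N k hk t).1 hN1 hN2
      have h2 := (hGt (N + 1) k hk t).2.1 (by push_cast; linarith) (by push_cast; linarith)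
      have h3 := hmε N t hN2
      have h4 := hmε (N + 1) t (by push_cast; linarith)
      have h5 := heb (N + 1) t (by push_cast; linarith)
      have h6 := mul_le_mul_of_nonneg_left (hp N) hεt.le
      change |iteratedDeriv k (fun s : ℝ => f s - (G (N + 1) s).re) t| ≤ _ at h1
      change |iteratedDeriv k (fun s : ℝ => f s - (G (N + 2) s).re) t| ≤
        |iteratedDeriv k (fun s : ℝ => f s - (G (N + 1) s).re) t| + _ + _ at h2
      simp only [pow_add] at h3 h4 ⊢
      norm_num at h3 h4 h6 ⊢
      linarith
    | succ j ih =>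
      have h1 := (hGt (N + 2 + j) k hk t).2.2 (by push_cast; linarith [j.cast_nonneg (α := ℝ)])
      have h2 := hmε (N + 2 + j) t (by push_cast; linarith [j.cast_nonneg (α := ℝ)])
      change |iteratedDeriv k (fun s : ℝ => f s - (G (N + 2 + (j + 1)) s).re) t| ≤
        |iteratedDeriv k (fun s : ℝ => f s - (G (N + 2 + j) s).re) t| + _ at h1
      simp only [pow_add] at h2 ih ⊢
      norm_num at h2 ih ⊢
      linarith
  filter_upwards [eventually_ge_atTop (N + 2)] with n hn
  obtain ⟨j, rfl⟩ := Nat.exists_eq_add_of_le hn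
  refine (key j).trans (mul_le_of_le_one_right hεt.le ?_)
  linarith [show (0 : ℝ) ≤ (1 / 2) ^ (N + 3 + j) by positivity]
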